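/- (Theorem 2) Let n ∈ Im(Ca') with g(n,n) = 1 (a point of S^{2,4}), and let X, Y ∈ Im(Ca') with g(X,n) = g(Y,n) = 0 (tangent vectors at n). Define J Z := n×Z and (∇_A J)B := A×B − g(A×B, n)·n. Then the Nijenhuis tensor of the Cayley almost complex structure J, given by N(X,Y) = 2·((∇_{JX} J)Y − (∇_{JY} J)X + J((∇_Y J)X) − J((∇_X J)Y)), satisfies N(X,Y) = −8·n×(X×Y) = −8·J(X×Y). In particular the Cayley almost complex structure on S^{2,4} is non-integrable. -/

import Mathlib

-- The split octonion algebra Ca' as pairs of real quaternions.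
noncomputable section

abbrev Ca : Type := Quaternion ℝ × Quaternion ℝ

namespace Ca

/-- Split octonion multiplication: (a,b)·(c,d) = (ac + (conj d)b, da + b(conj c)). -/
def mul (x y : Ca) : Ca :=
  (x.1 * y.1 + star y.2 * x.2, y.2 * x.1 + x.2 * star y.1)

/-- The unit (1,0). -/
def one : Ca := (1, 0)

/-- Conjugation conj(a,b) = (conj a, −b). -/
def conj (x : Ca) : Ca := (star x.1, -x.2)

/-- Real part Re(a,b) = re a. -/
def re (x : Ca) : ℝ := x.1.re

/-- Norm form N(a,b) = ‖a‖² − ‖b‖², of signature (4,4). -/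
def N (x : Ca) : ℝ := Quaternion.normSq x.1 - Quaternion.normSq x.2

/-- The symmetric bilinear form ⟨x,y⟩ = (N(x+y) − N(x) − N(y))/2. -/
def bil (x y : Ca) : ℝ := (N (x + y) - N x - N y) / 2

/-- The vector cross product on Im(Ca'): X × Y := X·Y + g(X,Y)·1. -/
def cross (X Y : Ca) : Ca := mul X Y + bil X Y • one

end Ca

/-- The covariant derivative of the Cayley almost complex structure on S^{2,4}:
(∇_A J)B = A×B − g(A×B,n)·n. -/
def nablaJ (n A B : Ca) : Ca := Ca.cross A B - Ca.bil (Ca.cross A B) n • n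

/-- The Cayley almost complex structure J X = n×X. -/
def Jmap (n X : Ca) : Ca := Ca.cross n X

/-!
Polarizing `x × (x × y) = g(x, y) x - g(x, x) y` rewrites `(n × X) × Y` as `-n × (X × Y)` plus a
multiple of `n` that is symmetric in `X` and `Y`, whenever `X` and `Y` are orthogonal to `n`. The
symmetric term cancels when `X` and `Y` are exchanged, and each of the four terms of the Nijenhuis
tensor contributes `-n × (X × Y)`. For split octonions the identity for `x × (x × y)` is the
identity `x̄ (x y) = N(x) y` read on imaginary elements, where `x̄ = -x`.
-/

/-- A vector cross product on a module with a symmetric bilinear form. The form may be degenerate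
and of any signature. -/
structure VectorCrossProduct (R V : Type*) [CommRing R] [AddCommGroup V] [Module R V] where
  form : LinearMap.BilinForm R V
  cross : V →ₗ[R] V →ₗ[R] V
  form_comm (x y : V) : form x y = form y x
  cross_self (x : V) : cross x x = 0
  form_cross_left_self (x y : V) : form (cross x y) x = 0
  cross_left_cross_self (x y : V) : cross x (cross x y) = form x y • x - form x x • y

namespace VectorCrossProduct

variable {R V : Type*} [CommRing R] [AddCommGroup V] [Module R V] (C : VectorCrossProduct R V)

theorem neg_cross (x y : V) : -C.cross x y = C.cross y x :=
  LinearMap.IsAlt.neg C.cross_self x y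

theorem cross_left_cross_add_swap (x y z : V) :
    C.cross x (C.cross y z) + C.cross y (C.cross x z) =
      C.form x z • y + C.form y z • x - (2 * C.form x y) • z := by
  have hxy := C.cross_left_cross_self (x + y) z
  simp only [map_add, LinearMap.add_apply, C.form_comm y x] at hxy
  linear_combination (norm := module)
    hxy - C.cross_left_cross_self x z - C.cross_left_cross_self y z

theorem cross_cross (x y z : V) :
    C.cross (C.cross x y) z = -C.cross x (C.cross y z)
      + (2 * C.form x z) • y - C.form x y • z - C.form y z • x := by
  have hswap := C.cross_left_cross_add_swap x z y
  rw [← C.neg_cross y z, map_neg, ← C.neg_cross _ z, C.form_comm z y] at hswap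
  linear_combination (norm := module) -hswap

/-- The almost complex structure `J Z = n × Z` at `n`, as an endomorphism of the whole ambient
module; it squares to `-1` on the tangent space `n^⊥` where `g(n, n) = 1`. -/
def J (n : V) : V →ₗ[R] V := C.cross n

/-- The covariant derivative `(∇_A J) B` at `n`, that is, `A × B` with its component along `n`
removed; this is the tangential part only where `g(n, n) = 1`. -/
def nabla (n A B : V) : V := C.cross A B - C.form (C.cross A B) n • n

variable {C} {n X Y : V}

theorem J_nabla (n A B : V) : C.J n (C.nabla n A B) = C.J n (C.cross A B) := by
  simp [J, nabla, C.cross_self]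

theorem nabla_J (hX : C.form X n = 0) (hY : C.form Y n = 0) :
    C.nabla n (C.J n X) Y =
      -C.J n (C.cross X Y) + (C.form X Y * (C.form n n - 1)) • n := by
  have hcross : C.cross (C.J n X) Y = -C.J n (C.cross X Y) - C.form X Y • n := by
    simp [J, C.cross_cross, C.form_comm n, hX, hY]
  have hnormal : C.form (C.cross (C.J n X) Y) n = -(C.form X Y * C.form n n) := by
    rw [hcross]
    simp [J, C.form_cross_left_self]
  rw [nabla, hnormal, hcross]
  module

end VectorCrossProduct

theorem nijenhuis_J_general {R V : Type*} [CommRing R] [AddCommGroup V] [Module R V]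
    (C : VectorCrossProduct R V) {n X Y : V} (hX : C.form X n = 0) (hY : C.form Y n = 0) :
    (2 : R) • (C.nabla n (C.J n X) Y - C.nabla n (C.J n Y) X
        + C.J n (C.nabla n Y X) - C.J n (C.nabla n X Y)) =
      (-8 : R) • C.J n (C.cross X Y) := by
  rw [VectorCrossProduct.nabla_J hX hY, VectorCrossProduct.nabla_J hY hX,
    VectorCrossProduct.J_nabla, VectorCrossProduct.J_nabla, ← C.neg_cross X Y, map_neg,
    C.form_comm Y X]
  module

namespace Ca

theorem bil_eq_inner (x y : Ca) : bil x y = inner ℝ x.1 y.1 - inner ℝ x.2 y.2 := by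
  simp only [bil, N, Quaternion.normSq_eq_norm_mul_self, ← sq, Prod.fst_add, Prod.snd_add,
    norm_add_sq_real]
  ring

theorem bil_comm (x y : Ca) : bil x y = bil y x := by
  simp only [bil_eq_inner, real_inner_comm]

theorem bil_self (x : Ca) : bil x x = N x := by
  simp only [bil_eq_inner, Quaternion.inner_self, N]

theorem bil_one (x : Ca) : bil x one = re x := by
  simp [bil_eq_inner, Quaternion.inner_def, one, re]

theorem re_conj_mul (x y : Ca) : re (mul (conj x) y) = bil x y := by
  simp only [re, mul, conj, bil_eq_inner, Quaternion.inner_def, mul_neg, neg_mul,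
    Quaternion.re_add, Quaternion.re_neg, Quaternion.re_mul, Quaternion.re_star,
    Quaternion.imI_star, Quaternion.imJ_star, Quaternion.imK_star]
  ring

protected theorem mul_one (x : Ca) : mul x one = x := by
  simp [mul, one]

theorem conj_mul_mul (x y : Ca) : mul (conj x) (mul x y) = N x • y := by
  ext1
  · calc star x.1 * (x.1 * y.1 + star y.2 * x.2) + star (y.2 * x.1 + x.2 * star y.1) * -x.2
      _ = star x.1 * x.1 * y.1 - y.1 * (star x.2 * x.2) := by
        simp only [star_add, star_mul, star_star]; noncomm_ring
      _ = N x • y.1 := by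
        simp only [Quaternion.star_mul_self, ← Quaternion.coe_commutes,
          Quaternion.coe_mul_eq_smul, N, sub_smul]
  · calc (y.2 * x.1 + x.2 * star y.1) * star x.1 + -x.2 * star (x.1 * y.1 + star y.2 * x.2)
      _ = y.2 * (x.1 * star x.1) - x.2 * star x.2 * y.2 := by
        simp only [star_add, star_mul, star_star]; noncomm_ring
      _ = N x • y.2 := by
        simp only [Quaternion.self_mul_star, ← Quaternion.coe_commutes,
          Quaternion.coe_mul_eq_smul, N, sub_smul]

/-- Multiplication of split octonions, bundled as a bilinear map. -/
def mulBilin : Ca →ₗ[ℝ] Ca →ₗ[ℝ] Ca :=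
  LinearMap.mk₂ ℝ mul
    (fun x x' y => by
      simp only [mul, Prod.fst_add, Prod.snd_add, Prod.mk_add_mk]; ext1 <;> noncomm_ring)
    (fun c x y => by simp [mul])
    (fun x y y' => by
      simp only [mul, Prod.fst_add, Prod.snd_add, star_add, Prod.mk_add_mk]; ext1 <;> noncomm_ring)
    (fun c x y => by simp [mul])

theorem mulBilin_apply (x y : Ca) : mulBilin x y = mul x y := rfl

/-- The form `⟨x, y⟩`, bundled as a bilinear form. -/
def bilForm : LinearMap.BilinForm ℝ Ca :=
  LinearMap.mk₂ ℝ bil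
    (fun x x' y => by simp only [bil_eq_inner, Prod.fst_add, Prod.snd_add, inner_add_left]; ring)
    (fun c x y => by simp [bil_eq_inner, inner_smul_left, mul_sub])
    (fun x y y' => by simp only [bil_eq_inner, Prod.fst_add, Prod.snd_add, inner_add_right]; ring)
    (fun c x y => by simp [bil_eq_inner, inner_smul_right, mul_sub])

theorem bilForm_apply (x y : Ca) : bilForm x y = bil x y := rfl

/-- The vector cross product, bundled as a bilinear map on all of `Ca'`; it is alternating only on
imaginary elements. -/
def crossBilin : Ca →ₗ[ℝ] Ca →ₗ[ℝ] Ca :=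
  mulBilin + bilForm.compr₂ (LinearMap.toSpanSingleton ℝ Ca one)

/-- The space `Im(Ca')` of purely imaginary split octonions. -/
def imaginary : Submodule ℝ Ca where
  carrier := {x | re x = 0}
  zero_mem' := rfl
  add_mem' {x y} hx hy := by simp_all [re]
  smul_mem' c x hx := by simp_all [re]

theorem conj_of_mem_imaginary {x : Ca} (hx : x ∈ imaginary) : conj x = -x := by
  simp [conj, Prod.ext_iff, Quaternion.star_eq_neg.2 hx]

theorem mul_of_mem_imaginary {x : Ca} (hx : x ∈ imaginary) (y : Ca) :
    mul x y = -mul (conj x) y := by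
  rw [conj_of_mem_imaginary hx, ← mulBilin_apply, ← mulBilin_apply, LinearMap.map_neg₂, neg_neg]

theorem mul_left_mul_self_of_mem_imaginary {x : Ca} (hx : x ∈ imaginary) (y : Ca) :
    mul x (mul x y) = -(N x • y) := by
  rw [mul_of_mem_imaginary hx, conj_mul_mul]

theorem cross_mem_imaginary {x : Ca} (hx : x ∈ imaginary) (y : Ca) :
    cross x y ∈ imaginary := by
  have hre : re (mul x y) = -bil x y := by
    rw [mul_of_mem_imaginary hx, ← re_conj_mul]
    rfl
  calc re (cross x y)
    _ = re (mul x y) + bil x y * re one := rfl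
    _ = 0 := by rw [hre, ← bil_one, bil_self]; simp [N, one]

theorem cross_self_of_mem_imaginary {x : Ca} (hx : x ∈ imaginary) : cross x x = 0 := by
  have hsq : mul x x = -(N x • one) := by
    simpa only [Ca.mul_one] using mul_left_mul_self_of_mem_imaginary hx one
  rw [cross, hsq, bil_self, neg_add_cancel]

theorem bil_mul_left_self (x y : Ca) : bil x (mul x y) = N x * re y := by
  rw [← re_conj_mul, conj_mul_mul]
  rfl

theorem bil_cross_left_self_of_mem_imaginary {x y : Ca} (hx : x ∈ imaginary)
    (hy : y ∈ imaginary) : bil (cross x y) x = 0 := by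
  have hx₀ : re x = 0 := hx
  have hy₀ : re y = 0 := hy
  calc bil (cross x y) x
    _ = bil x (mul x y) + bil x y * bil x one := by
      simp only [cross, bil_comm _ x, ← bilForm_apply, map_add, map_smul, smul_eq_mul]
    _ = 0 := by rw [bil_mul_left_self, bil_one, hx₀, hy₀]; ring

theorem cross_left_cross_self_of_mem_imaginary {x y : Ca} (hx : x ∈ imaginary)
    (hy : y ∈ imaginary) : cross x (cross x y) = bil x y • x - bil x x • y := by
  have horth : bil x (cross x y) = 0 :=
    bil_comm _ _ ▸ bil_cross_left_self_of_mem_imaginary hx hy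
  calc cross x (cross x y)
    _ = mul x (mul x y + bil x y • one) := by rw [cross, horth, zero_smul, add_zero, cross]
    _ = mul x (mul x y) + bil x y • mul x one := by
      simp only [← mulBilin_apply x, map_add, map_smul]
    _ = bil x y • x - bil x x • y := by
      rw [mul_left_mul_self_of_mem_imaginary hx, Ca.mul_one, bil_self, neg_add_eq_sub]

/-- The vector cross product on `Im(Ca')` with respect to the form `g` of signature `(3, 4)`. -/
def imaginaryCross : VectorCrossProduct ℝ imaginary where
  form := bilForm.restrict imaginary
  cross := LinearMap.mk₂ ℝ (fun x y => ⟨cross x y, cross_mem_imaginary x.2 y⟩)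
    (fun x x' y => Subtype.ext (crossBilin.map_add₂ (x : Ca) x' y))
    (fun c x y => Subtype.ext (crossBilin.map_smul₂ c (x : Ca) y))
    (fun x y y' => Subtype.ext ((crossBilin x).map_add y y'))
    (fun c x y => Subtype.ext ((crossBilin x).map_smul c y))
  form_comm x y := bil_comm x y
  cross_self x := Subtype.ext (cross_self_of_mem_imaginary x.2)
  form_cross_left_self x y := bil_cross_left_self_of_mem_imaginary x.2 y.2
  cross_left_cross_self x y := Subtype.ext (cross_left_cross_self_of_mem_imaginary x.2 y.2)

end Ca

/-- Theorem 2: the Nijenhuis tensor of the Cayley almost complex structure J on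
S^{2,4} satisfies N(X,Y) = −8·n×(X×Y) = −8·J(X×Y); in particular it is nonzero
whenever X×Y ≠ 0, so J is non-integrable. -/
theorem nijenhuis_J (n X Y : Ca) (hn : Ca.re n = 0) (hnn : Ca.bil n n = 1)
    (hX : Ca.re X = 0) (hY : Ca.re Y = 0)
    (hXn : Ca.bil X n = 0) (hYn : Ca.bil Y n = 0) :
    (2 : ℝ) • (nablaJ n (Jmap n X) Y - nablaJ n (Jmap n Y) X
        + Jmap n (nablaJ n Y X) - Jmap n (nablaJ n X Y)) =
      (-8 : ℝ) • Ca.cross n (Ca.cross X Y) ∧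
    (-8 : ℝ) • Ca.cross n (Ca.cross X Y) = (-8 : ℝ) • Jmap n (Ca.cross X Y) := by
  have hIm := nijenhuis_J_general Ca.imaginaryCross
    (n := ⟨n, hn⟩) (X := ⟨X, hX⟩) (Y := ⟨Y, hY⟩) hXn hYn
  exact ⟨congrArg Subtype.val hIm, rfl⟩
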